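/- Let p be an odd prime, m ≥ 1, α with v_p(α - 1) = m, and H = ⟨A,B | A^{[A,B]} = A^α, B^{[B,A]} = B^α, A^{p^{2m}} = B^{p^{2m}} = 1⟩ of order p^{6m}. For every pair (x,y) ∈ Z_2(H) × Z_2(H), the assignment A ↦ Ax, B ↦ By extends to an automorphism of H fixing Z_2(H) pointwise, and the resulting map Z_2(H)² → Aut(H) is an injective homomorphism whose image is Aut_2(H), so |Aut_2(H)| = p^{6m}. -/

import Mathlib

/-- Relators of the group `H(α)`:
`A^{[A,B]} = A^α`, `B^{[B,A]} = B^α`, `A^{p^{2m}} = 1`, `B^{p^{2m}} = 1`,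
with the convention `[A,B] = A⁻¹B⁻¹AB` and `x^y = y⁻¹xy`. -/
def hRels (p m : ℕ) (α : ℤ) : Set (FreeGroup (Fin 2)) :=
  let A : FreeGroup (Fin 2) := FreeGroup.of 0
  let B : FreeGroup (Fin 2) := FreeGroup.of 1
  let C : FreeGroup (Fin 2) := A⁻¹ * B⁻¹ * A * B
  {(C⁻¹ * A * C) * (A ^ α)⁻¹, (C * B * C⁻¹) * (B ^ α)⁻¹,
    A ^ (p ^ (2 * m)), B ^ (p ^ (2 * m))}

/-- The group `H(α)` of order `p^{6m}`. -/
abbrev HGroup (p m : ℕ) (α : ℤ) := PresentedGroup (hRels p m α)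

/-- `v_p(α - 1) = m`. -/
def vCond (p m : ℕ) (α : ℤ) : Prop :=
  (p : ℤ) ^ m ∣ α - 1 ∧ ¬ (p : ℤ) ^ (m + 1) ∣ α - 1

/-- The extra condition required when `p = 3` and `m = 1`. -/
def specialCond (p m : ℕ) (α : ℤ) : Prop :=
  p = 3 ∧ m = 1 → (α - 1) / 3 ≡ 1 [ZMOD 3]


/-- `autC T i` is `Aut_i(T)`: automorphisms `g` with `g t * t⁻¹ ∈ Z_i(T)` for all `t`. -/
def autC (T : Type*) [Group T] (i : ℕ) : Subgroup (MulAut T) where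
  carrier := {g | ∀ t : T, g t * t⁻¹ ∈ upperCentralSeries T i}
  one_mem' := by intro t; simpa using (upperCentralSeries T i).one_mem
  mul_mem' := by
    intro g h hg hh t
    have h1 := hg (h t)
    have h2 := hh t
    have : (g * h) t * t⁻¹ = (g (h t) * (h t)⁻¹) * (h t * t⁻¹) := by
      simp [MulAut.mul_apply, mul_assoc]
    rw [this]
    exact mul_mem h1 h2
  inv_mem' := by
    intro g hg t
    have h1 := hg (g⁻¹ t)
    have h2 : g (g⁻¹ t) = t := by simp
    rw [h2] at h1
    have h3 := (upperCentralSeries T i).inv_mem h1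
    simpa using h3

/-!
Write `q = p ^ m` and `C = A⁻¹B⁻¹AB`. The relations move `C` past `A` and `B`, so every element
of `H` is a product `B ^ j * C ^ k * A ^ i`; a representation of `H` by permutations of pairs over
`ZMod (q ^ 2)` shows that the exponents are unique modulo `q²`. An element of `Z₂(H)` commutes with
the commutator `C`, which forces `q` to divide its exponents, and conversely `A ^ q`, `B ^ q` and
`C ^ q` lie in `Z₂(H)`; thus `Z₂(H)` has order `q³` and exponent `q`.

For `x, y ∈ Z₂(H)` the commutator `[Ax, By]` is `C` times a central element, and
`(Ax) ^ q = A ^ q` because `q` is odd. Hence `Ax` and `By` again satisfy the relations of `H`, and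
the resulting endomorphism fixes `A ^ q`, `B ^ q` and `C ^ q`, so it fixes `Z₂(H)` pointwise.
Therefore composing two such endomorphisms multiplies the pairs `(x, y)`.
-/

section Arithmetic

theorem dvd_choose_two_of_odd {n : ℕ} (hn : Odd n) : n ∣ n.choose 2 := by
  obtain ⟨k, rfl⟩ := hn
  refine ⟨k, ?_⟩
  rw [Nat.choose_two_right, Nat.add_sub_cancel, mul_left_comm, Nat.mul_div_cancel_left _ two_pos]

theorem sq_dvd_geom_sum_sub_of_odd {q : ℕ} (hq : Odd q) {β : ℤ} (hβ : (q : ℤ) ∣ β - 1) :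
    (q : ℤ) ^ 2 ∣ ∑ i ∈ Finset.range q, β ^ i - q := by
  obtain ⟨b, hb⟩ := hβ
  obtain rfl : β = 1 + q * b := by linarith
  simpa using odd_sq_dvd_geom_sum₂_sub (1 : ℤ) b hq

theorem dvd_of_sq_dvd_mul_of_gcd_eq {a n : ℤ} {q : ℕ} (hq : q ≠ 0)
    (ha : Int.gcd a ((q : ℤ) ^ 2) = q) (h : (q : ℤ) ^ 2 ∣ a * n) : (q : ℤ) ∣ n := by
  have hgcd : (q : ℤ) ^ 2 ∣ q * n := by
    have := dvd_gcd_mul_of_dvd_mul h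
    rwa [gcd_comm, ← Int.coe_gcd, ha] at this
  rw [sq] at hgcd
  exact Int.dvd_of_mul_dvd_mul_left (by exact_mod_cast hq) hgcd

theorem fin_eq_of_sq_dvd_mul_sub_mul {q : ℕ} {i j : Fin q}
    (h : (q : ℤ) ^ 2 ∣ q * (i : ℕ) - q * (j : ℕ)) : i = j := by
  have hq : (q : ℤ) ≠ 0 := by exact_mod_cast i.pos.ne'
  rw [sq, ← mul_sub] at h
  have hmod : (j : ℕ) ≡ i [MOD q] := Nat.modEq_iff_dvd.2 (Int.dvd_of_mul_dvd_mul_left hq h)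
  exact Fin.ext (hmod.symm.eq_of_lt_of_lt i.isLt j.isLt)

theorem gcd_sub_one_eq_of_vCond {p m : ℕ} {α : ℤ} (hp : p.Prime) (hα : vCond p m α) :
    Int.gcd (α - 1) ((p : ℤ) ^ (2 * m)) = p ^ m := by
  obtain ⟨⟨u, hu⟩, hndvd⟩ := hα
  have hpu : ¬(p : ℤ) ∣ u := fun hdvd => hndvd <| by
    rw [hu, pow_succ]
    exact mul_dvd_mul_left _ hdvd
  have hcop : Int.gcd u ((p : ℤ) ^ m) = 1 := Int.isCoprime_iff_gcd_eq_one.1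
    ((Nat.prime_iff_prime_int.1 hp).coprime_iff_not_dvd.2 hpu).symm.pow_right
  rw [hu, two_mul, pow_add, Int.gcd_mul_left, hcop, mul_one, Int.natAbs_pow, Int.natAbs_natCast]

end Arithmetic

open scoped commutatorElement

section Group

variable {G : Type*} [Group G]

theorem zpow_eq_zpow_of_dvd_sub {g : G} {n : ℕ} (hg : g ^ n = 1) {a b : ℤ}
    (hab : (n : ℤ) ∣ a - b) : g ^ a = g ^ b :=
  zpow_eq_zpow_iff_modEq.2 <| Int.ModEq.of_dvd
    (Int.natCast_dvd_natCast.2 (orderOf_dvd_of_pow_eq_one hg)) (Int.modEq_iff_dvd.2 hab).symm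

theorem zpow_mul_pow_eq_one {g : G} {q : ℕ} (hg : g ^ q ^ 2 = 1) (n : ℤ) :
    (g ^ (q * n)) ^ q = 1 := by
  rw [← zpow_natCast, zpow_comm, zpow_natCast, zpow_mul, zpow_natCast, ← pow_mul, ← sq, hg,
    one_zpow]

theorem exists_fin_zpow_mul_eq {g : G} {q : ℕ} (hq : 0 < q) (hg : g ^ q ^ 2 = 1) (n : ℤ) :
    ∃ r : Fin q, g ^ (q * (r : ℕ) : ℤ) = g ^ (q * n) := by
  have hn : 0 ≤ n % q := Int.emod_nonneg n (by exact_mod_cast hq.ne')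
  have hnq : n % q < q := Int.emod_lt_of_pos n (by exact_mod_cast hq)
  refine ⟨⟨(n % q).toNat, (Int.toNat_lt hn).2 hnq⟩, zpow_eq_zpow_of_dvd_sub hg ?_⟩
  rw [Int.toNat_of_nonneg hn, Nat.cast_pow, sq, ← mul_sub]
  exact mul_dvd_mul_left _ (dvd_sub_comm.1 (Int.dvd_self_sub_emod))

theorem mul_pow_of_semiconjBy_zpow {b c : G} {β : ℤ} (h : SemiconjBy c b (b ^ β)) (n : ℕ) :
    (b * c) ^ n = b ^ (∑ i ∈ Finset.range n, β ^ i) * c ^ n := by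
  induction n with
  | zero => simp
  | succ n ih =>
    have hc := (h.zpow_right (∑ i ∈ Finset.range n, β ^ i)).eq
    rw [pow_succ', ih, mul_assoc b, ← mul_assoc c, hc, ← zpow_mul, geom_sum_succ, add_comm _ 1,
      zpow_one_add, pow_succ' c]
    simp only [mul_assoc]

theorem mul_pow_of_semiconjBy_mul {g x z : G} (h : SemiconjBy x g (z * g)) (hg : Commute z g)
    (hx : Commute z x) (n : ℕ) : (g * x) ^ n = g ^ n * x ^ n * z ^ n.choose 2 := by
  have hxg : ∀ k : ℕ, x ^ k * g = z ^ k * g * x ^ k := fun k => by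
    induction k with
    | zero => simp
    | succ k ih =>
      rw [pow_succ', mul_assoc, ih, mul_assoc, ← mul_assoc x, ← (hx.pow_left k).eq, mul_assoc,
        ← mul_assoc x, h.eq, pow_succ z]
      simp only [mul_assoc]
  induction n with
  | zero => simp
  | succ n ih =>
    calc (g * x) ^ (n + 1) = g ^ n * x ^ n * (z ^ n.choose 2 * (g * x)) := by
          rw [pow_succ, ih, mul_assoc]
      _ = g ^ n * (x ^ n * g) * x * z ^ n.choose 2 := by
          rw [((hg.mul_right hx).pow_left _).eq]
          simp only [mul_assoc]
      _ = g ^ n * (z ^ n * (g * x ^ (n + 1))) * z ^ n.choose 2 := by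
          rw [hxg, pow_succ x]
          simp only [mul_assoc]
      _ = g ^ (n + 1) * x ^ (n + 1) * z ^ (n + 1).choose 2 := by
          rw [((hg.mul_right (hx.pow_right _)).pow_left n).eq, Nat.choose_succ_succ' n 1,
            Nat.choose_one_right, pow_add z, pow_succ g]
          simp only [mul_assoc]

theorem commutatorElement_mul_mul_of_mem_center {a b z w : G} (hz : z ∈ Subgroup.center G)
    (hw : w ∈ Subgroup.center G) : ⁅z * a, w * b⁆ = ⁅a, b⁆ := by
  have hz' : ∀ g, Commute z g := fun g => (Subgroup.mem_center_iff.1 hz g).symm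
  have hw' : ∀ g, Commute w g := fun g => (Subgroup.mem_center_iff.1 hw g).symm
  calc ⁅z * a, w * b⁆ = z * (a * (w * (b * a⁻¹ * z⁻¹ * b⁻¹) * w⁻¹)) := by
        simp only [commutatorElement_def, mul_inv_rev, mul_assoc]
    _ = z * (a * b * a⁻¹) * z⁻¹ * b⁻¹ := by
        rw [(hw' _).eq, mul_inv_cancel_right]
        simp only [mul_assoc]
    _ = ⁅a, b⁆ := by rw [(hz' _).eq, mul_inv_cancel_right, commutatorElement_def]

theorem semiconjBy_commutatorElement (x g : G) : SemiconjBy x g (⁅x, g⁆ * g) := by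
  simp [SemiconjBy, commutatorElement_def]

theorem commutatorElement_mem_center_of_mem_upperCentralSeries_two {x : G}
    (hx : x ∈ Subgroup.upperCentralSeries G 2) (g : G) : ⁅x, g⁆ ∈ Subgroup.center G := by
  rw [← Subgroup.upperCentralSeries_one]
  exact Subgroup.mem_upperCentralSeries_succ_iff.1 hx g

theorem mem_upperCentralSeries_two_iff_mk_mem_center {x : G} :
    x ∈ Subgroup.upperCentralSeries G 2 ↔
      (x : G ⧸ Subgroup.center G) ∈ Subgroup.center (G ⧸ Subgroup.center G) := by
  rw [Subgroup.mem_upperCentralSeries_succ_iff, Subgroup.upperCentralSeries_one]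
  change x ∈ Subgroup.upperCentralSeriesStep (Subgroup.center G) ↔ _
  rw [Subgroup.upperCentralSeriesStep_eq_comap_center]
  rfl

theorem center_le_upperCentralSeries_two :
    Subgroup.center G ≤ Subgroup.upperCentralSeries G 2 := by
  rw [← Subgroup.upperCentralSeries_one]
  exact Subgroup.upperCentralSeries_mono G one_le_two

theorem mem_center_of_forall_commute {S : Set G} (hS : Subgroup.closure S = ⊤) {x : G}
    (h : ∀ s ∈ S, Commute x s) : x ∈ Subgroup.center G := by
  simpa [Subgroup.center_eq_iInf hS, Subgroup.mem_centralizer_singleton_iff] using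
    fun s hs => (h s hs).eq

theorem mem_upperCentralSeries_two_of_forall_commutatorElement {S : Set G}
    (hS : Subgroup.closure S = ⊤) {x : G} (h : ∀ s ∈ S, ⁅x, s⁆ ∈ Subgroup.center G) :
    x ∈ Subgroup.upperCentralSeries G 2 := by
  rw [mem_upperCentralSeries_two_iff_mk_mem_center]
  have hmk : Subgroup.closure (QuotientGroup.mk' (Subgroup.center G) '' S) = ⊤ := by
    rw [← MonoidHom.map_closure, hS, ← MonoidHom.range_eq_map, QuotientGroup.range_mk']
  refine mem_center_of_forall_commute hmk ?_
  rintro _ ⟨s, hs, rfl⟩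
  rw [← commutatorElement_eq_one_iff_commute]
  exact (QuotientGroup.eq_one_iff _).2 (h s hs)

theorem commute_commutatorElement_of_mem_upperCentralSeries_two {x : G}
    (hx : x ∈ Subgroup.upperCentralSeries G 2) (a b : G) : Commute x ⁅a, b⁆ := by
  have hcen := commutatorElement_mem_center_of_mem_upperCentralSeries_two hx
  rw [commute_iff_eq, ← mul_inv_eq_iff_eq_mul, conjugate_commutatorElement,
    ← MulAut.conj_apply, ← MulAut.conj_apply, conj_eq_commutatorElement_mul,
    conj_eq_commutatorElement_mul, commutatorElement_mul_mul_of_mem_center (hcen a) (hcen b)]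

theorem exists_commutatorElement_mul_eq {a b x y : G}
    (hx : x ∈ Subgroup.upperCentralSeries G 2) (hy : y ∈ Subgroup.upperCentralSeries G 2) :
    ∃ z ∈ Subgroup.center G, ⁅(a * x)⁻¹, (b * y)⁻¹⁆ = ⁅a⁻¹, b⁻¹⁆ * z := by
  have hcen : ∀ {t : G}, t ∈ Subgroup.upperCentralSeries G 2 →
      (t⁻¹ : G ⧸ Subgroup.center G) ∈ Subgroup.center (G ⧸ Subgroup.center G) := fun ht =>
    inv_mem (mem_upperCentralSeries_two_iff_mk_mem_center.1 ht)
  refine ⟨⁅a⁻¹, b⁻¹⁆⁻¹ * ⁅(a * x)⁻¹, (b * y)⁻¹⁆, QuotientGroup.eq.1 ?_, by group⟩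
  simp only [← QuotientGroup.mk'_apply, map_commutatorElement]
  simp only [QuotientGroup.mk'_apply, mul_inv_rev, QuotientGroup.mk_mul, QuotientGroup.mk_inv]
  exact (commutatorElement_mul_mul_of_mem_center (hcen hx) (hcen hy)).symm

theorem mul_pow_eq_pow_of_mem_upperCentralSeries_two {q : ℕ} (hq : Odd q)
    (hexp : ∀ x ∈ Subgroup.upperCentralSeries G 2, x ^ q = 1) {x : G}
    (hx : x ∈ Subgroup.upperCentralSeries G 2) (g : G) : (g * x) ^ q = g ^ q := by
  have hz := commutatorElement_mem_center_of_mem_upperCentralSeries_two hx g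
  have hcomm : ∀ y, Commute ⁅x, g⁆ y := fun y => (Subgroup.mem_center_iff.1 hz y).symm
  obtain ⟨k, hk⟩ := dvd_choose_two_of_odd hq
  rw [mul_pow_of_semiconjBy_mul (semiconjBy_commutatorElement x g) (hcomm g) (hcomm x),
    hexp x hx, hk, pow_mul, hexp _ (center_le_upperCentralSeries_two hz), one_pow, mul_one, mul_one]

theorem commute_pow_of_mem_upperCentralSeries_two {q : ℕ}
    (hexp : ∀ x ∈ Subgroup.upperCentralSeries G 2, x ^ q = 1) {x : G}
    (hx : x ∈ Subgroup.upperCentralSeries G 2) (g : G) : Commute x (g ^ q) := by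
  have hz := commutatorElement_mem_center_of_mem_upperCentralSeries_two hx g
  have hcomm : Commute ⁅x, g⁆ g := (Subgroup.mem_center_iff.1 hz g).symm
  have hsemi := (semiconjBy_commutatorElement x g).pow_right q
  rwa [hcomm.mul_pow, hexp _ (center_le_upperCentralSeries_two hz), one_mul] at hsemi

end Group

/-- The relations of the group `⟨A, B | A^C = A^α, B^(C⁻¹) = B^α, A^(q²) = B^(q²) = 1⟩`, where
`C = A⁻¹B⁻¹AB`, for elements `A`, `B`, `C` of an arbitrary group. The parameters are an odd number
`q` and an integer `α` whose difference from `1` has greatest common divisor `q` with `q²`; the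
paper has `q = p ^ m`. -/
structure IsMacdonaldTriple {G : Type*} [Group G] (q : ℕ) (α : ℤ) (A B C : G) : Prop where
  odd : Odd q
  gcd_eq : Int.gcd (α - 1) ((q : ℤ) ^ 2) = q
  eq_commutatorElement : C = ⁅A⁻¹, B⁻¹⁆
  semiconjBy_inv_left : SemiconjBy C⁻¹ A (A ^ α)
  semiconjBy_right : SemiconjBy C B (B ^ α)
  left_pow_eq_one : A ^ q ^ 2 = 1
  right_pow_eq_one : B ^ q ^ 2 = 1

namespace IsMacdonaldTriple

variable {G : Type*} [Group G] {q : ℕ} {α : ℤ} {A B C : G}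

theorem symm (h : IsMacdonaldTriple q α A B C) : IsMacdonaldTriple q α B A C⁻¹ where
  odd := h.odd
  gcd_eq := h.gcd_eq
  eq_commutatorElement := by rw [h.eq_commutatorElement, commutatorElement_inv]
  semiconjBy_inv_left := by simpa using h.semiconjBy_right
  semiconjBy_right := h.semiconjBy_inv_left
  left_pow_eq_one := h.right_pow_eq_one
  right_pow_eq_one := h.left_pow_eq_one

theorem dvd_sub_one (h : IsMacdonaldTriple q α A B C) : (q : ℤ) ∣ α - 1 := by
  have hdvd := Int.gcd_dvd_left (α - 1) ((q : ℤ) ^ 2)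
  rwa [h.gcd_eq] at hdvd

theorem left_zpow_eq (h : IsMacdonaldTriple q α A B C) {a b : ℤ} (hab : (q : ℤ) ^ 2 ∣ a - b) :
    A ^ a = A ^ b :=
  zpow_eq_zpow_of_dvd_sub h.left_pow_eq_one (by exact_mod_cast hab)

theorem semiconjBy_left (h : IsMacdonaldTriple q α A B C) : SemiconjBy C A (A ^ (2 - α)) := by
  have hinv : (A ^ α) ^ (2 - α) = A := by
    rw [← zpow_mul]
    conv_rhs => rw [← zpow_one A]
    refine h.left_zpow_eq ((pow_dvd_pow_of_dvd h.dvd_sub_one 2).trans ⟨-1, ?_⟩)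
    ring
  have hsemi := h.semiconjBy_inv_left.zpow_right (2 - α)
  rw [hinv] at hsemi
  exact SemiconjBy.inv_symm_left_iff.1 hsemi

theorem zpow_semiconjBy_left (h : IsMacdonaldTriple q α A B C) (n : ℤ) :
    SemiconjBy (C ^ n) A (A ^ (1 - n * (α - 1))) := by
  have hdvd := pow_dvd_pow_of_dvd h.dvd_sub_one 2
  induction n with
  | zero => simp
  | succ n ih =>
    have hexp : (q : ℤ) ^ 2 ∣ (1 - n * (α - 1)) * (2 - α) - (1 - (n + 1) * (α - 1)) :=
      (hdvd.mul_left (n : ℤ)).trans (dvd_of_eq (by ring))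
    have hsemi := (ih.zpow_right (2 - α)).mul_left h.semiconjBy_left
    rwa [← zpow_mul, ← zpow_add_one, h.left_zpow_eq hexp] at hsemi
  | pred n ih =>
    have hexp : (q : ℤ) ^ 2 ∣ (1 - -n * (α - 1)) * α - (1 - (-n - 1) * (α - 1)) :=
      (hdvd.mul_left (n : ℤ)).trans (dvd_of_eq (by ring))
    have hsemi := (ih.zpow_right α).mul_left h.semiconjBy_inv_left
    rwa [← zpow_mul, ← zpow_sub_one, h.left_zpow_eq hexp] at hsemi

theorem zpow_semiconjBy_right (h : IsMacdonaldTriple q α A B C) (n : ℤ) :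
    SemiconjBy (C ^ n) B (B ^ (1 + n * (α - 1))) := by
  simpa using h.symm.zpow_semiconjBy_left (-n)

theorem commute_pow_left (h : IsMacdonaldTriple q α A B C) : Commute (C ^ q) A := by
  have hsemi := h.zpow_semiconjBy_left q
  rwa [zpow_natCast, h.left_zpow_eq (b := 1), zpow_one] at hsemi
  rw [sub_sub_cancel_left, dvd_neg, sq]
  exact mul_dvd_mul_left _ h.dvd_sub_one

theorem commute_pow_right (h : IsMacdonaldTriple q α A B C) : Commute (C ^ q) B := by
  simpa using h.symm.commute_pow_left

theorem left_inv_semiconjBy (h : IsMacdonaldTriple q α A B C) : SemiconjBy A⁻¹ B (B * C⁻¹) := by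
  simp [SemiconjBy, h.eq_commutatorElement, commutatorElement_def, mul_assoc]

theorem left_inv_semiconjBy_pow (h : IsMacdonaldTriple q α A B C) (n : ℕ) :
    SemiconjBy A⁻¹ (B ^ n) (B ^ (∑ i ∈ Finset.range n, (2 - α) ^ i) * (C ^ n)⁻¹) := by
  rw [← inv_pow, ← mul_pow_of_semiconjBy_zpow h.symm.semiconjBy_left]
  exact h.left_inv_semiconjBy.pow_right n

theorem left_inv_semiconjBy_pow_self (h : IsMacdonaldTriple q α A B C) :
    SemiconjBy A⁻¹ (B ^ q) (B ^ q * (C ^ q)⁻¹) := by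
  have hsum : B ^ (∑ i ∈ Finset.range q, (2 - α) ^ i) = B ^ q := by
    rw [← zpow_natCast B q]
    refine h.symm.left_zpow_eq (sq_dvd_geom_sum_sub_of_odd h.odd ?_)
    rw [show 2 - α - 1 = -(α - 1) by ring, dvd_neg]
    exact h.dvd_sub_one
  simpa only [hsum] using h.left_inv_semiconjBy_pow q

theorem commutator_pow_eq_one (h : IsMacdonaldTriple q α A B C) : C ^ q ^ 2 = 1 := by
  have hcomm : Commute (B ^ q) (C ^ q)⁻¹ := (h.commute_pow_right.pow_right q).symm.inv_right
  -- The `q`-th power of `A⁻¹ * B ^ q * A = B ^ q * (C ^ q)⁻¹` is `1 = (C ^ q ^ 2)⁻¹`.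
  have hsemi := h.left_inv_semiconjBy_pow_self.pow_right q
  rw [hcomm.mul_pow, ← pow_mul, ← sq, h.right_pow_eq_one, one_mul, inv_pow, ← pow_mul,
    ← sq] at hsemi
  simpa [SemiconjBy] using hsemi

theorem left_pow_semiconjBy (h : IsMacdonaldTriple q α A B C) :
    SemiconjBy (A ^ q) B (C ^ q * B) := by
  have hsemi : B⁻¹ * A ^ q = A ^ q * C ^ q * B⁻¹ := by
    simpa using h.symm.left_inv_semiconjBy_pow_self.eq
  have hcomm : Commute (C ^ q) (A ^ q) := h.commute_pow_left.pow_right q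
  rw [SemiconjBy, h.commute_pow_right.eq, mul_assoc, hcomm.eq, ← inv_mul_eq_iff_eq_mul,
    ← mul_assoc, hsemi, inv_mul_cancel_right]

theorem commutatorElement_left_pow (h : IsMacdonaldTriple q α A B C) : ⁅A ^ q, B⁆ = C ^ q := by
  rw [commutatorElement_def, h.left_pow_semiconjBy.eq]
  group

theorem commute_left_pow_right_pow (h : IsMacdonaldTriple q α A B C) :
    Commute (A ^ q) (B ^ q) := by
  have hsemi := h.left_pow_semiconjBy.pow_right q
  rwa [h.commute_pow_right.mul_pow, ← pow_mul, ← sq, h.commutator_pow_eq_one, one_mul] at hsemi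

theorem exists_left_inv_semiconjBy_zpow (h : IsMacdonaldTriple q α A B C) (n : ℤ) :
    ∃ s : ℤ, SemiconjBy A⁻¹ (B ^ n) (B ^ s * C ^ (-n)) := by
  have hq : ((q ^ 2 : ℕ) : ℤ) ≠ 0 := by simpa using h.odd.pos.ne'
  obtain ⟨k, hk⟩ := Int.eq_ofNat_of_zero_le (Int.emod_nonneg n hq)
  refine ⟨∑ i ∈ Finset.range k, (2 - α) ^ i, ?_⟩
  rw [zpow_eq_zpow_emod' n h.right_pow_eq_one, zpow_neg,
    zpow_eq_zpow_emod' n h.commutator_pow_eq_one, hk, zpow_natCast, zpow_natCast]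
  exact h.left_inv_semiconjBy_pow k

theorem exists_left_inv_mul_normalForm (h : IsMacdonaldTriple q α A B C) (j k i : ℤ) :
    ∃ j' k' i' : ℤ, A⁻¹ * (B ^ j * C ^ k * A ^ i) = B ^ j' * C ^ k' * A ^ i' := by
  obtain ⟨s, hs⟩ := h.exists_left_inv_semiconjBy_zpow j
  have hk : SemiconjBy (C ^ k) (A ^ (-(1 - -k * (α - 1)))) A⁻¹ := by
    rw [← SemiconjBy.inv_symm_left_iff, ← zpow_neg, zpow_neg A]
    exact (h.zpow_semiconjBy_left (-k)).inv_right
  refine ⟨s, -j + k, -(1 - -k * (α - 1)) + i, ?_⟩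
  calc A⁻¹ * (B ^ j * C ^ k * A ^ i) = B ^ s * C ^ (-j) * (A⁻¹ * C ^ k) * A ^ i := by
        rw [← mul_assoc, ← mul_assoc, hs.eq, mul_assoc _ A⁻¹]
    _ = B ^ s * C ^ (-j + k) * A ^ (-(1 - -k * (α - 1)) + i) := by
        rw [← hk.eq, zpow_add, zpow_add]
        simp only [mul_assoc]

theorem exists_normalForm (h : IsMacdonaldTriple q α A B C)
    (hgen : Subgroup.closure {A, B} = ⊤) (x : G) : ∃ j k i : ℤ, x = B ^ j * C ^ k * A ^ i := by
  -- Products of `A⁻¹` and `B` suffice since both have finite order; the relations rewrite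
  -- `A⁻¹ * B ^ n` directly.
  have hfin : ∀ s ∈ ({A⁻¹, B} : Set G), IsOfFinOrder s := by
    have hq : 0 < q ^ 2 := pow_pos h.odd.pos 2
    rintro s (rfl | rfl)
    · exact (isOfFinOrder_iff_pow_eq_one.2 ⟨q ^ 2, hq, h.left_pow_eq_one⟩).inv
    · exact isOfFinOrder_iff_pow_eq_one.2 ⟨q ^ 2, hq, h.right_pow_eq_one⟩
  have hle : Subgroup.closure {A, B} ≤ Subgroup.closure {A⁻¹, B} := by
    rw [Subgroup.closure_le, Set.pair_subset_iff]
    exact ⟨by simpa using inv_mem (Subgroup.subset_closure (Set.mem_insert A⁻¹ {B})),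
      Subgroup.subset_closure (Set.mem_insert_of_mem _ rfl)⟩
  have hx : x ∈ Submonoid.closure {A⁻¹, B} := by
    rw [← Subgroup.closure_toSubmonoid_of_isOfFinOrder hfin, Subgroup.mem_toSubmonoid]
    exact hle (hgen ▸ Subgroup.mem_top x)
  induction hx using Submonoid.closure_induction_left with
  | one => exact ⟨0, 0, 0, by simp⟩
  | mul_left s hs y _ ih =>
    obtain ⟨j, k, i, rfl⟩ := ih
    obtain rfl | rfl := hs
    · exact h.exists_left_inv_mul_normalForm j k i
    · exact ⟨j + 1, k, i, by rw [add_comm, zpow_one_add, mul_assoc, mul_assoc, mul_assoc]⟩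

theorem commutator_pow_mem_center (h : IsMacdonaldTriple q α A B C)
    (hgen : Subgroup.closure {A, B} = ⊤) : C ^ q ∈ Subgroup.center G := by
  refine mem_center_of_forall_commute hgen ?_
  rintro s (rfl | rfl)
  · exact h.commute_pow_left
  · exact h.commute_pow_right

theorem commutator_zpow_mul_mem_center (h : IsMacdonaldTriple q α A B C)
    (hgen : Subgroup.closure {A, B} = ⊤) (k : ℤ) : C ^ (q * k) ∈ Subgroup.center G := by
  rw [zpow_mul, zpow_natCast]
  exact zpow_mem (h.commutator_pow_mem_center hgen) k

theorem left_zpow_mul_mem_upperCentralSeries_two (h : IsMacdonaldTriple q α A B C)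
    (hgen : Subgroup.closure {A, B} = ⊤) (i : ℤ) :
    A ^ (q * i) ∈ Subgroup.upperCentralSeries G 2 := by
  rw [zpow_mul, zpow_natCast]
  refine zpow_mem (mem_upperCentralSeries_two_of_forall_commutatorElement hgen ?_) i
  rintro s (rfl | rfl)
  · rw [((Commute.refl _).pow_left q).commutator_eq]
    exact one_mem _
  · rw [h.commutatorElement_left_pow]
    exact h.commutator_pow_mem_center hgen

theorem right_zpow_mul_mem_upperCentralSeries_two (h : IsMacdonaldTriple q α A B C)
    (hgen : Subgroup.closure {A, B} = ⊤) (j : ℤ) :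
    B ^ (q * j) ∈ Subgroup.upperCentralSeries G 2 :=
  h.symm.left_zpow_mul_mem_upperCentralSeries_two (Set.pair_comm A B ▸ hgen) j

theorem dvd_of_sq_dvd_sub_one_mul (h : IsMacdonaldTriple q α A B C) {n : ℤ}
    (hn : (q : ℤ) ^ 2 ∣ (α - 1) * n) : (q : ℤ) ∣ n :=
  dvd_of_sq_dvd_mul_of_gcd_eq h.odd.pos.ne' h.gcd_eq hn

end IsMacdonaldTriple

/-- Generators `A`, `B` of a group satisfying the relations of `IsMacdonaldTriple`, such that the
exponents modulo `q²` in a normal form `B ^ j * C ^ k * A ^ i` are unique. As every element has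
such a normal form, these are the Macdonald triples generating a group of order `q⁶`. -/
structure IsMacdonaldBasis {G : Type*} [Group G] (q : ℕ) (α : ℤ) (A B C : G) : Prop extends
    IsMacdonaldTriple q α A B C where
  closure_eq_top : Subgroup.closure {A, B} = ⊤
  dvd_sub_of_normalForm_eq {j k i j' k' i' : ℤ} :
    B ^ j * C ^ k * A ^ i = B ^ j' * C ^ k' * A ^ i' →
      (q : ℤ) ^ 2 ∣ j - j' ∧ (q : ℤ) ^ 2 ∣ k - k' ∧ (q : ℤ) ^ 2 ∣ i - i'

namespace IsMacdonaldBasis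

variable {G : Type*} [Group G] {q : ℕ} {α : ℤ} {A B C : G}

theorem dvd_of_commutator_zpow_mem (h : IsMacdonaldBasis q α A B C) {k : ℤ}
    (hk : C ^ k ∈ Subgroup.upperCentralSeries G 2) : (q : ℤ) ∣ k := by
  have hcomm : ⁅C ^ k, B⁆ = B ^ ((α - 1) * k) := by
    rw [commutatorElement_def, (h.zpow_semiconjBy_right k).eq]
    group
  have hcen := commutatorElement_mem_center_of_mem_upperCentralSeries_two hk B
  rw [hcomm, Subgroup.mem_center_iff] at hcen
  obtain ⟨s, hs⟩ := h.exists_left_inv_semiconjBy_zpow ((α - 1) * k)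
  have hnf : B ^ ((α - 1) * k) * C ^ (0 : ℤ) * A ^ (0 : ℤ) =
      B ^ s * C ^ (-((α - 1) * k)) * A ^ (0 : ℤ) := by
    simpa [hcen A⁻¹] using hs.eq
  have hdvd := (h.dvd_sub_of_normalForm_eq hnf).2.1
  rw [zero_sub, neg_neg] at hdvd
  exact h.dvd_of_sq_dvd_sub_one_mul hdvd

theorem dvd_of_normalForm_commute (h : IsMacdonaldBasis q α A B C) {j k i : ℤ}
    (hcomm : Commute C (B ^ j * C ^ k * A ^ i)) : (q : ℤ) ∣ j ∧ (q : ℤ) ∣ i := by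
  have hsemi : SemiconjBy C (B ^ j * C ^ k * A ^ i) (B ^ (α * j) * C ^ k * A ^ ((2 - α) * i)) := by
    rw [zpow_mul, zpow_mul]
    exact ((h.semiconjBy_right.zpow_right j).mul_right ((Commute.refl C).zpow_right k)).mul_right
      (h.semiconjBy_left.zpow_right i)
  obtain ⟨hj, -, hi⟩ := h.dvd_sub_of_normalForm_eq
    (mul_right_cancel (hsemi.eq.symm.trans hcomm.eq))
  refine ⟨h.dvd_of_sq_dvd_sub_one_mul (hj.trans ⟨1, ?_⟩),
    h.dvd_of_sq_dvd_sub_one_mul (hi.trans ⟨-1, ?_⟩)⟩ <;> ring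

theorem normalForm_mem_upperCentralSeries_two (h : IsMacdonaldBasis q α A B C) (j k i : ℤ) :
    B ^ (q * j) * C ^ (q * k) * A ^ (q * i) ∈ Subgroup.upperCentralSeries G 2 :=
  mul_mem (mul_mem (h.right_zpow_mul_mem_upperCentralSeries_two h.closure_eq_top j)
    (center_le_upperCentralSeries_two (h.commutator_zpow_mul_mem_center h.closure_eq_top k)))
    (h.left_zpow_mul_mem_upperCentralSeries_two h.closure_eq_top i)

theorem exists_normalForm_of_mem_upperCentralSeries_two (h : IsMacdonaldBasis q α A B C) {x : G}
    (hx : x ∈ Subgroup.upperCentralSeries G 2) :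
    ∃ j k i : ℤ, x = B ^ (q * j) * C ^ (q * k) * A ^ (q * i) := by
  obtain ⟨j, k, i, rfl⟩ := h.exists_normalForm h.closure_eq_top x
  have hcomm := commute_commutatorElement_of_mem_upperCentralSeries_two hx A⁻¹ B⁻¹
  rw [← h.eq_commutatorElement] at hcomm
  obtain ⟨⟨j, rfl⟩, ⟨i, rfl⟩⟩ := h.dvd_of_normalForm_commute hcomm.symm
  rw [Subgroup.mul_mem_cancel_right _
      (h.left_zpow_mul_mem_upperCentralSeries_two h.closure_eq_top i),
    Subgroup.mul_mem_cancel_left _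
      (h.right_zpow_mul_mem_upperCentralSeries_two h.closure_eq_top j)] at hx
  obtain ⟨k, rfl⟩ := h.dvd_of_commutator_zpow_mem hx
  exact ⟨j, k, i, rfl⟩

theorem pow_eq_one_of_mem_upperCentralSeries_two (h : IsMacdonaldBasis q α A B C) (x : G)
    (hx : x ∈ Subgroup.upperCentralSeries G 2) : x ^ q = 1 := by
  obtain ⟨j, k, i, rfl⟩ := h.exists_normalForm_of_mem_upperCentralSeries_two hx
  have hC : ∀ g, Commute (C ^ (q * k)) g := fun g =>
    (Subgroup.mem_center_iff.1 (h.commutator_zpow_mul_mem_center h.closure_eq_top k) g).symm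
  have hAB : Commute (B ^ (q * j)) (A ^ (q * i)) := by
    simpa only [zpow_mul, zpow_natCast] using
      (h.commute_left_pow_right_pow.zpow_zpow i j).symm
  rw [(hAB.mul_left (hC _)).mul_pow, (hC _).symm.mul_pow, zpow_mul_pow_eq_one h.left_pow_eq_one,
    zpow_mul_pow_eq_one h.right_pow_eq_one, zpow_mul_pow_eq_one h.commutator_pow_eq_one, one_mul,
    one_mul]

theorem card_upperCentralSeries_two (h : IsMacdonaldBasis q α A B C) :
    Nat.card (Subgroup.upperCentralSeries G 2) = q ^ 3 := by
  let f : Fin q × Fin q × Fin q → Subgroup.upperCentralSeries G 2 := fun t =>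
    ⟨_, h.normalForm_mem_upperCentralSeries_two (t.1 : ℕ) (t.2.1 : ℕ) (t.2.2 : ℕ)⟩
  have hf : Function.Bijective f := by
    constructor
    · intro s t hst
      obtain ⟨hj, hk, hi⟩ := h.dvd_sub_of_normalForm_eq (congrArg Subtype.val hst)
      exact Prod.ext (fin_eq_of_sq_dvd_mul_sub_mul hj)
        (Prod.ext (fin_eq_of_sq_dvd_mul_sub_mul hk) (fin_eq_of_sq_dvd_mul_sub_mul hi))
    · rintro ⟨x, hx⟩
      obtain ⟨j, k, i, rfl⟩ := h.exists_normalForm_of_mem_upperCentralSeries_two hx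
      obtain ⟨j', hj⟩ := exists_fin_zpow_mul_eq h.odd.pos h.right_pow_eq_one j
      obtain ⟨k', hk⟩ := exists_fin_zpow_mul_eq h.odd.pos h.commutator_pow_eq_one k
      obtain ⟨i', hi⟩ := exists_fin_zpow_mul_eq h.odd.pos h.left_pow_eq_one i
      exact ⟨(j', k', i'), Subtype.ext (by simp only [f, hj, hk, hi])⟩
  rw [← Nat.card_congr (Equiv.ofBijective f hf)]
  simp [pow_succ, mul_assoc]

theorem mul_zpow_of_mem_upperCentralSeries_two (h : IsMacdonaldBasis q α A B C) {x : G}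
    (hx : x ∈ Subgroup.upperCentralSeries G 2) (g : G) : (g * x) ^ α = g ^ α * x := by
  have hexp := h.pow_eq_one_of_mem_upperCentralSeries_two
  obtain ⟨t, ht⟩ := h.dvd_sub_one
  have hpow : ∀ y : G, y ^ α = y * (y ^ q) ^ t := fun y => by
    rw [← zpow_natCast, ← zpow_mul, ← ht, ← zpow_one_add, add_sub_cancel]
  rw [hpow, hpow, mul_pow_eq_pow_of_mem_upperCentralSeries_two h.odd hexp hx, mul_assoc, mul_assoc,
    ((commute_pow_of_mem_upperCentralSeries_two hexp hx g).zpow_right t).eq]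

theorem exists_isMacdonaldTriple_mul (h : IsMacdonaldBasis q α A B C) {x y : G}
    (hx : x ∈ Subgroup.upperCentralSeries G 2) (hy : y ∈ Subgroup.upperCentralSeries G 2) :
    ∃ C', IsMacdonaldTriple q α (A * x) (B * y) C' ∧ C' ^ q = C ^ q := by
  have hexp := h.pow_eq_one_of_mem_upperCentralSeries_two
  obtain ⟨z, hz, hcomm⟩ := exists_commutatorElement_mul_eq (a := A) (b := B) hx hy
  rw [← h.eq_commutatorElement] at hcomm
  have hzc : ∀ g, Commute z g := fun g => (Subgroup.mem_center_iff.1 hz g).symm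
  have hCc : ∀ {w}, w ∈ Subgroup.upperCentralSeries G 2 → Commute C w := fun hw => by
    rw [h.eq_commutatorElement]
    exact (commute_commutatorElement_of_mem_upperCentralSeries_two hw _ _).symm
  have hpow : ∀ {w}, w ∈ Subgroup.upperCentralSeries G 2 → ∀ g : G, (g * w) ^ q = g ^ q :=
    mul_pow_eq_pow_of_mem_upperCentralSeries_two h.odd hexp
  refine ⟨C * z, ⟨h.odd, h.gcd_eq, hcomm.symm, ?_, ?_, ?_, ?_⟩,
    hpow (center_le_upperCentralSeries_two hz) C⟩
  · rw [h.mul_zpow_of_mem_upperCentralSeries_two hx, mul_inv_rev]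
    exact SemiconjBy.mul_left (hzc _).inv_left
      (h.semiconjBy_inv_left.mul_right (hCc hx).inv_left)
  · rw [h.mul_zpow_of_mem_upperCentralSeries_two hy]
    exact (h.semiconjBy_right.mul_right (hCc hy)).mul_left (hzc _)
  · rw [sq, pow_mul, hpow hx, ← pow_mul, ← sq, h.left_pow_eq_one]
  · rw [sq, pow_mul, hpow hy, ← pow_mul, ← sq, h.right_pow_eq_one]

theorem map_eq_self_of_mem_upperCentralSeries_two (h : IsMacdonaldBasis q α A B C) {x y : G}
    (hx : x ∈ Subgroup.upperCentralSeries G 2) (hy : y ∈ Subgroup.upperCentralSeries G 2)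
    {f : G →* G} (hfA : f A = A * x) (hfB : f B = B * y) {z : G}
    (hz : z ∈ Subgroup.upperCentralSeries G 2) : f z = z := by
  have hexp := h.pow_eq_one_of_mem_upperCentralSeries_two
  obtain ⟨C', hC', hpow⟩ := h.exists_isMacdonaldTriple_mul hx hy
  have hfC : f C = C' := by
    rw [h.eq_commutatorElement, map_commutatorElement, map_inv, map_inv, hfA, hfB,
      hC'.eq_commutatorElement]
  obtain ⟨j, k, i, rfl⟩ := h.exists_normalForm_of_mem_upperCentralSeries_two hz
  simp only [map_mul, map_zpow, zpow_mul, zpow_natCast, map_pow, hfA, hfB, hfC, hpow,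
    mul_pow_eq_pow_of_mem_upperCentralSeries_two h.odd hexp hx,
    mul_pow_eq_pow_of_mem_upperCentralSeries_two h.odd hexp hy]

end IsMacdonaldBasis

section Model

open Equiv (Perm)
open Multiplicative (ofAdd)

theorem map_ofAdd_one_zpow {R G : Type*} [Ring R] [Group G] (φ : Multiplicative R →* G) (n : ℤ) :
    φ (ofAdd 1) ^ n = φ (ofAdd (n : R)) := by
  rw [← map_zpow, ← ofAdd_zsmul, zsmul_one]

/-- The homomorphism to the permutations of `X` given by a one-parameter group `f` of
self-maps of `X`. -/
def oneParameterGroup {R X : Type*} [AddGroup R] (f : R → X → X) (hzero : ∀ x, f 0 x = x)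
    (hadd : ∀ m n x, f (m + n) x = f m (f n x)) : Multiplicative R →* Perm X :=
  MonoidHom.toHomPerm
    { toFun := fun n => f n.toAdd
      map_one' := funext hzero
      map_mul' := fun m n => funext (hadd m.toAdd n.toAdd) }

variable {R : Type*} [CommRing R] (d : R)

/-- The one-parameter group of the generator `A` in a permutation model of the Macdonald relations
on `R × R`, where `α = 1 - 4d` and `d² = 0`. A pair `(j, k)` stands for the coset of
`B ^ j * C ^ k` modulo the powers of `A`, on which `A ^ n` acts by left multiplication. -/
def leftModel (hd : d * d = 0) : Multiplicative R →* Perm (R × R) :=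
  oneParameterGroup
    (fun n x => (x.1 - 2 * n * d * (x.1 * (x.1 - 1)),
      x.2 + n * x.1 - n * (n + 1) * d * (x.1 * (x.1 - 1))))
    (fun x => by simp)
    (fun m n x => by
      ext
      · linear_combination (8 * m * n ^ 2 * d * (x.1 * (x.1 - 1)) ^ 2 -
          4 * m * n * (x.1 * (x.1 - 1)) * (2 * x.1 - 1)) * hd
      · linear_combination m * (m + 1) * (4 * n ^ 2 * d * (x.1 * (x.1 - 1)) ^ 2 -
          2 * n * (x.1 * (x.1 - 1)) * (2 * x.1 - 1)) * hd)

/-- The one-parameter group of the generator `B` in the model of `leftModel`. -/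
def rightModel (R : Type*) [CommRing R] : Multiplicative R →* Perm (R × R) :=
  oneParameterGroup (fun n x => (x.1 + n, x.2)) (fun x => by simp)
    (fun m n x => by rw [add_right_comm, add_assoc])

/-- The one-parameter group of the commutator `C` in the model of `leftModel`. -/
def commutatorModel (hd : d * d = 0) : Multiplicative R →* Perm (R × R) :=
  oneParameterGroup (fun n x => ((1 - 4 * d * n) * x.1, x.2 + n)) (fun x => by simp)
    (fun m n x => by
      ext
      · linear_combination -16 * m * n * x.1 * hd
      · ring)

variable {d}

@[simp]
theorem leftModel_ofAdd_apply (hd : d * d = 0) (n j k : R) :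
    leftModel d hd (ofAdd n) (j, k) =
      (j - 2 * n * d * (j * (j - 1)), k + n * j - n * (n + 1) * d * (j * (j - 1))) :=
  rfl

@[simp]
theorem rightModel_ofAdd_apply (n j k : R) : rightModel R (ofAdd n) (j, k) = (j + n, k) :=
  rfl

@[simp]
theorem commutatorModel_ofAdd_apply (hd : d * d = 0) (n j k : R) :
    commutatorModel d hd (ofAdd n) (j, k) = ((1 - 4 * d * n) * j, k + n) :=
  rfl

theorem commutatorElement_leftModel_rightModel (hd : d * d = 0) :
    ⁅(leftModel d hd (ofAdd 1))⁻¹, (rightModel R (ofAdd 1))⁻¹⁆ =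
      commutatorModel d hd (ofAdd 1) := by
  have hmul : leftModel d hd (ofAdd 1) * rightModel R (ofAdd 1) =
      rightModel R (ofAdd 1) * leftModel d hd (ofAdd 1) * commutatorModel d hd (ofAdd 1) := by
    ext1 ⟨j, k⟩
    simp only [Equiv.Perm.mul_apply, leftModel_ofAdd_apply, rightModel_ofAdd_apply,
      commutatorModel_ofAdd_apply]
    ext
    · linear_combination (32 * d * j ^ 2 - 16 * j ^ 2 + 8 * j) * hd
    · linear_combination (32 * d * j ^ 2 - 16 * j ^ 2 + 8 * j) * hd
  rw [commutatorElement_def, inv_inv, inv_inv, mul_assoc, hmul]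
  group

theorem semiconjBy_commutatorModel_leftModel (hd : d * d = 0) :
    SemiconjBy (commutatorModel d hd (ofAdd 1)) (leftModel d hd (ofAdd (1 - 4 * d)))
      (leftModel d hd (ofAdd 1)) := by
  ext1 ⟨j, k⟩
  simp only [Equiv.Perm.mul_apply, leftModel_ofAdd_apply, commutatorModel_ofAdd_apply]
  ext
  · linear_combination (32 * d * j - 8 * j) * hd
  · linear_combination (16 * d * j ^ 2 + 16 * d * j - 4 * j ^ 2 - 4 * j) * hd

theorem semiconjBy_commutatorModel_rightModel (hd : d * d = 0) :
    SemiconjBy (commutatorModel d hd (ofAdd 1)) (rightModel R (ofAdd 1))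
      (rightModel R (ofAdd (1 - 4 * d))) := by
  ext1 ⟨j, k⟩
  simp only [Equiv.Perm.mul_apply, rightModel_ofAdd_apply, commutatorModel_ofAdd_apply]
  ext
  · ring
  · rfl

theorem exists_sq_eq_zero_and_eq_one_sub_four_mul {q : ℕ} {α : ℤ} (hq : Odd q)
    (hα : (q : ℤ) ∣ α - 1) : ∃ d : ZMod (q ^ 2), d * d = 0 ∧ (α : ZMod (q ^ 2)) = 1 - 4 * d := by
  have hfour : (4 : ZMod (q ^ 2)) * 4⁻¹ = 1 :=
    mod_cast ZMod.coe_mul_inv_eq_one 4 ((Nat.coprime_two_left.2 hq.pow).pow_left 2)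
  have hsq : ((α : ZMod (q ^ 2)) - 1) ^ 2 = 0 := by
    have hdvd : ((q ^ 2 : ℕ) : ℤ) ∣ (α - 1) ^ 2 := by
      exact_mod_cast pow_dvd_pow_of_dvd hα 2
    exact_mod_cast (ZMod.intCast_zmod_eq_zero_iff_dvd _ _).2 hdvd
  refine ⟨4⁻¹ * (1 - α), ?_, ?_⟩
  · linear_combination (4⁻¹ : ZMod (q ^ 2)) ^ 2 * hsq
  · linear_combination (1 - α : ZMod (q ^ 2)) * hfour

theorem isMacdonaldTriple_model {q : ℕ} {α : ℤ} (hq : Odd q)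
    (hgcd : Int.gcd (α - 1) ((q : ℤ) ^ 2) = q) {d : ZMod (q ^ 2)} (hd : d * d = 0)
    (hα : (α : ZMod (q ^ 2)) = 1 - 4 * d) :
    IsMacdonaldTriple q α (leftModel d hd (ofAdd 1)) (rightModel (ZMod (q ^ 2)) (ofAdd 1))
      (commutatorModel d hd (ofAdd 1)) := by
  have hpow : ∀ {G : Type} [Group G] (φ : Multiplicative (ZMod (q ^ 2)) →* G),
      φ (ofAdd 1) ^ q ^ 2 = 1 := fun φ => by
    rw [← zpow_natCast, map_ofAdd_one_zpow, Int.cast_natCast, ZMod.natCast_self, ofAdd_zero,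
      map_one]
  refine ⟨hq, hgcd, (commutatorElement_leftModel_rightModel hd).symm, ?_, ?_, hpow _, hpow _⟩
  · rw [map_ofAdd_one_zpow, hα]
    exact SemiconjBy.inv_symm_left_iff.2 (semiconjBy_commutatorModel_leftModel hd)
  · rw [map_ofAdd_one_zpow, hα]
    exact semiconjBy_commutatorModel_rightModel hd

theorem dvd_sub_of_normalForm_model_eq {q : ℕ} {d : ZMod (q ^ 2)} (hd : d * d = 0)
    {j k i j' k' i' : ℤ}
    (h : rightModel (ZMod (q ^ 2)) (ofAdd 1) ^ j * commutatorModel d hd (ofAdd 1) ^ k *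
        leftModel d hd (ofAdd 1) ^ i =
      rightModel (ZMod (q ^ 2)) (ofAdd 1) ^ j' * commutatorModel d hd (ofAdd 1) ^ k' *
        leftModel d hd (ofAdd 1) ^ i') :
    (q : ℤ) ^ 2 ∣ j - j' ∧ (q : ℤ) ^ 2 ∣ k - k' ∧ (q : ℤ) ^ 2 ∣ i - i' := by
  simp only [map_ofAdd_one_zpow] at h
  -- The normal form sends `(0, 0)` to `(j, k)` and `(1, 0)` to `(_, k + i)`.
  have hzero := DFunLike.congr_fun h (0, 0)
  have hone := DFunLike.congr_fun h (1, 0)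
  simp only [Equiv.Perm.mul_apply, leftModel_ofAdd_apply, rightModel_ofAdd_apply,
    commutatorModel_ofAdd_apply, Prod.mk.injEq, mul_zero, mul_one, sub_self, sub_zero, zero_mul,
    zero_add, add_zero] at hzero hone
  have hdvd : ∀ {a b : ℤ}, (a : ZMod (q ^ 2)) = b → (q : ℤ) ^ 2 ∣ a - b := fun hab => by
    exact_mod_cast (ZMod.intCast_zmod_eq_zero_iff_dvd _ _).1 (by push_cast; exact sub_eq_zero.2 hab)
  refine ⟨hdvd hzero.1, hdvd hzero.2, hdvd ?_⟩
  linear_combination hone.2 - hzero.2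

end Model

section GeneratorShift

variable {G : Type*} [Group G] {A B : G} {N : Subgroup G}

/-- An endomorphism of a group with chosen generators `A` and `B` that multiplies them on the right
by the entries of `t` and fixes `N` pointwise. -/
structure IsGeneratorShift (A B : G) (N : Subgroup G) (t : N × N) (f : G →* G) : Prop where
  map_left : f A = A * t.1
  map_right : f B = B * t.2
  map_mem : ∀ z ∈ N, f z = z

namespace IsGeneratorShift

theorem one (A B : G) (N : Subgroup G) : IsGeneratorShift A B N 1 (MonoidHom.id G) :=
  ⟨by simp, by simp, fun _ _ => rfl⟩

theorem comp {s t : N × N} {f g : G →* G} (hf : IsGeneratorShift A B N s f)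
    (hg : IsGeneratorShift A B N t g) : IsGeneratorShift A B N (s * t) (f.comp g) where
  map_left := by
    simp [hg.map_left, hf.map_left, hf.map_mem, mul_assoc]
  map_right := by
    simp [hg.map_right, hf.map_right, hf.map_mem, mul_assoc]
  map_mem z hz := by
    rw [MonoidHom.comp_apply, hg.map_mem z hz, hf.map_mem z hz]

theorem unique (hgen : Subgroup.closure {A, B} = ⊤) {t : N × N} {f g : G →* G}
    (hf : IsGeneratorShift A B N t f) (hg : IsGeneratorShift A B N t g) : f = g := by
  refine MonoidHom.eq_of_eqOn_dense hgen ?_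
  rintro s (rfl | rfl)
  · rw [hf.map_left, hg.map_left]
  · rw [hf.map_right, hg.map_right]

theorem shift_injective {s t : N × N} {f : G →* G} (hs : IsGeneratorShift A B N s f)
    (ht : IsGeneratorShift A B N t f) : s = t :=
  Prod.ext (Subtype.ext (mul_left_cancel (hs.map_left.symm.trans ht.map_left)))
    (Subtype.ext (mul_left_cancel (hs.map_right.symm.trans ht.map_right)))

theorem map_mul_inv_mem [N.Normal] (hgen : Subgroup.closure {A, B} = ⊤) {t : N × N} {f : G →* G}
    (hf : IsGeneratorShift A B N t f) (x : G) : f x * x⁻¹ ∈ N := by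
  have heq : (QuotientGroup.mk' N).comp f = QuotientGroup.mk' N := by
    refine MonoidHom.eq_of_eqOn_dense hgen ?_
    rintro s (rfl | rfl)
    · simp [hf.map_left]
    · simp [hf.map_right]
  rw [← div_eq_mul_inv, ← QuotientGroup.eq_iff_div_mem]
  exact DFunLike.congr_fun heq x

end IsGeneratorShift

theorem exists_generatorShift_hom (hgen : Subgroup.closure {A, B} = ⊤)
    (hshift : ∀ t, ∃ f, IsGeneratorShift A B N t f) :
    ∃ Φ : N × N →* MulAut G, ∀ t, IsGeneratorShift A B N t (Φ t).toMonoidHom := by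
  choose f hf using hshift
  have hmul : ∀ s t, (f s).comp (f t) = f (s * t) := fun s t =>
    ((hf s).comp (hf t)).unique hgen (hf (s * t))
  have hone : f 1 = MonoidHom.id G := (hf 1).unique hgen (IsGeneratorShift.one A B N)
  refine ⟨MonoidHom.mk' (fun t => MonoidHom.toMulEquiv (f t) (f t⁻¹) ?_ ?_) fun s t => ?_, hf⟩
  · rw [hmul, inv_mul_cancel, hone]
  · rw [hmul, mul_inv_cancel, hone]
  · exact MulEquiv.ext fun x => (DFunLike.congr_fun (hmul s t) x).symm

theorem mem_range_generatorShift_iff [N.Normal] (hgen : Subgroup.closure {A, B} = ⊤)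
    {Φ : N × N →* MulAut G} (hΦ : ∀ t, IsGeneratorShift A B N t (Φ t).toMonoidHom) {g : MulAut G} :
    g ∈ Φ.range ↔ ∀ x, g x * x⁻¹ ∈ N := by
  constructor
  · rintro ⟨t, rfl⟩
    exact (hΦ t).map_mul_inv_mem hgen
  · intro hg
    have hmem : ∀ x, x⁻¹ * g x ∈ N := fun x => by
      simpa [mul_assoc] using ‹N.Normal›.conj_mem _ (hg x) x⁻¹
    refine ⟨(⟨_, hmem A⟩, ⟨_, hmem B⟩), MulEquiv.toMonoidHom_injective ?_⟩
    refine MonoidHom.eq_of_eqOn_dense hgen ?_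
    rintro s (rfl | rfl)
    · exact (hΦ _).map_left.trans (mul_inv_cancel_left _ _)
    · exact (hΦ _).map_right.trans (mul_inv_cancel_left _ _)

theorem injective_of_forall_isGeneratorShift {Φ : N × N →* MulAut G}
    (hΦ : ∀ t, IsGeneratorShift A B N t (Φ t).toMonoidHom) : Function.Injective Φ :=
  fun s t hst => (hΦ s).shift_injective (hst ▸ hΦ t)

end GeneratorShift

namespace HGroup

variable {G : Type*} [Group G] {p m : ℕ} {α : ℤ}

theorem lift_hRels_eq_one {A B C : G} (h : IsMacdonaldTriple (p ^ m) α A B C) :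
    ∀ r ∈ hRels p m α, FreeGroup.lift ![A, B] r = 1 := by
  have hC : C = A⁻¹ * B⁻¹ * A * B := by
    rw [h.eq_commutatorElement, commutatorElement_def, inv_inv, inv_inv]
  have hexp : p ^ (2 * m) = (p ^ m) ^ 2 := by rw [← pow_mul, mul_comm]
  rintro r (rfl | rfl | rfl | rfl) <;>
    simp only [map_mul, map_inv, map_pow, map_zpow, FreeGroup.lift_apply_of, Matrix.cons_val_zero,
      Matrix.cons_val_one, ← hC]
  · rw [h.semiconjBy_inv_left.eq, inv_mul_cancel_right, mul_inv_cancel]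
  · rw [h.semiconjBy_right.eq, mul_inv_cancel_right, mul_inv_cancel]
  · rw [hexp, h.left_pow_eq_one]
  · rw [hexp, h.right_pow_eq_one]

theorem exists_hom {A B C : G} (h : IsMacdonaldTriple (p ^ m) α A B C) :
    ∃ f : HGroup p m α →* G, f (PresentedGroup.of 0) = A ∧ f (PresentedGroup.of 1) = B :=
  ⟨PresentedGroup.toGroup (lift_hRels_eq_one h), by simp, by simp⟩

theorem isMacdonaldTriple (hodd : Odd p)
    (hα : Int.gcd (α - 1) ((p : ℤ) ^ (2 * m)) = p ^ m) :
    IsMacdonaldTriple (p ^ m) α (PresentedGroup.of 0 : HGroup p m α) (PresentedGroup.of 1)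
      ⁅(PresentedGroup.of 0 : HGroup p m α)⁻¹, (PresentedGroup.of 1 : HGroup p m α)⁻¹⁆ := by
  have hexp : p ^ (2 * m) = (p ^ m) ^ 2 := by rw [← pow_mul, mul_comm]
  have hrel : ∀ r ∈ hRels p m α, PresentedGroup.mk (hRels p m α) r = 1 := fun r hr =>
    PresentedGroup.one_of_mem hr
  have hleft := hrel _ (Or.inl rfl)
  have hright := hrel _ (Or.inr (Or.inl rfl))
  simp only [map_mul, map_inv, map_zpow, mul_inv_eq_one] at hleft hright
  refine ⟨hodd.pow, ?_, rfl, ?_, ?_, ?_, ?_⟩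
  · rwa [Nat.cast_pow, ← pow_mul, mul_comm m]
  · rw [SemiconjBy, ← mul_inv_eq_iff_eq_mul, inv_inv, commutatorElement_def, inv_inv, inv_inv]
    exact hleft
  · rw [SemiconjBy, ← mul_inv_eq_iff_eq_mul, commutatorElement_def, inv_inv, inv_inv]
    exact hright
  · rw [← hexp]
    exact hrel _ (Or.inr (Or.inr (Or.inl rfl)))
  · rw [← hexp]
    exact hrel _ (Or.inr (Or.inr (Or.inr rfl)))

theorem closure_generators :
    Subgroup.closure {(PresentedGroup.of 0 : HGroup p m α), PresentedGroup.of 1} = ⊤ := by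
  rw [← PresentedGroup.closure_range_of]
  exact congrArg _ (Set.ext fun x => by simp [Fin.exists_fin_two, eq_comm])

theorem isMacdonaldBasis (hodd : Odd p)
    (hα : Int.gcd (α - 1) ((p : ℤ) ^ (2 * m)) = p ^ m) :
    IsMacdonaldBasis (p ^ m) α (PresentedGroup.of 0 : HGroup p m α) (PresentedGroup.of 1)
      ⁅(PresentedGroup.of 0 : HGroup p m α)⁻¹, (PresentedGroup.of 1 : HGroup p m α)⁻¹⁆ := by
  have h := isMacdonaldTriple hodd hα
  obtain ⟨d, hd, hdα⟩ := exists_sq_eq_zero_and_eq_one_sub_four_mul h.odd h.dvd_sub_one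
  have hmodel := isMacdonaldTriple_model h.odd h.gcd_eq hd hdα
  obtain ⟨f, hfA, hfB⟩ := exists_hom hmodel
  refine ⟨h, closure_generators, fun heq => dvd_sub_of_normalForm_model_eq hd ?_⟩
  simpa only [map_mul, map_zpow, map_commutatorElement, map_inv, hfA, hfB,
    ← hmodel.eq_commutatorElement] using congrArg f heq

theorem exists_isGeneratorShift (hodd : Odd p)
    (hα : Int.gcd (α - 1) ((p : ℤ) ^ (2 * m)) = p ^ m)
    (t : Subgroup.upperCentralSeries (HGroup p m α) 2 ×
      Subgroup.upperCentralSeries (HGroup p m α) 2) :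
    ∃ f, IsGeneratorShift (PresentedGroup.of 0) (PresentedGroup.of 1)
      (Subgroup.upperCentralSeries (HGroup p m α) 2) t f := by
  have h := isMacdonaldBasis hodd hα
  obtain ⟨_, hC, -⟩ := h.exists_isMacdonaldTriple_mul t.1.2 t.2.2
  obtain ⟨f, hfA, hfB⟩ := exists_hom hC
  exact ⟨f, hfA, hfB, fun z =>
    h.map_eq_self_of_mem_upperCentralSeries_two t.1.2 t.2.2 hfA hfB⟩

end HGroup

theorem HGroup_twoCentral_automorphisms_general (p m : ℕ) (hodd : Odd p) (α : ℤ)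
    (hα : Int.gcd (α - 1) ((p : ℤ) ^ (2 * m)) = p ^ m) :
    ∃ Pi : (Subgroup.upperCentralSeries (HGroup p m α) 2) ×
        (Subgroup.upperCentralSeries (HGroup p m α) 2) →* MulAut (HGroup p m α),
      Function.Injective Pi ∧
      Pi.range = autC (HGroup p m α) 2 ∧
      (∀ x y : Subgroup.upperCentralSeries (HGroup p m α) 2,
        Pi (x, y) (PresentedGroup.of 0) = (PresentedGroup.of 0 : HGroup p m α) * x ∧
        Pi (x, y) (PresentedGroup.of 1) = (PresentedGroup.of 1 : HGroup p m α) * y ∧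
        ∀ z ∈ Subgroup.upperCentralSeries (HGroup p m α) 2, Pi (x, y) z = z) ∧
      Nat.card (autC (HGroup p m α) 2) = p ^ (6 * m) := by
  obtain ⟨Φ, hΦ⟩ := exists_generatorShift_hom HGroup.closure_generators
    (HGroup.exists_isGeneratorShift hodd hα)
  have hinj := injective_of_forall_isGeneratorShift hΦ
  have hrange : Φ.range = autC (HGroup p m α) 2 :=
    SetLike.ext fun _ => mem_range_generatorShift_iff HGroup.closure_generators hΦ
  refine ⟨Φ, hinj, hrange, fun x y => ⟨(hΦ (x, y)).map_left, (hΦ (x, y)).map_right,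
    (hΦ (x, y)).map_mem⟩, ?_⟩
  rw [← hrange, ← Nat.card_congr (MonoidHom.ofInjective hinj).toEquiv, Nat.card_prod,
    (HGroup.isMacdonaldBasis hodd hα).card_upperCentralSeries_two, ← pow_add, ← pow_mul, mul_comm]

theorem HGroup_twoCentral_automorphisms (p m : ℕ) (hp : p.Prime) (hodd : Odd p) (hm : 1 ≤ m)
    (α : ℤ) (hα : vCond p m α) (hα' : specialCond p m α) :
    ∃ Pi : (upperCentralSeries (HGroup p m α) 2) × (upperCentralSeries (HGroup p m α) 2) →*
        MulAut (HGroup p m α),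
      Function.Injective Pi ∧
      Pi.range = autC (HGroup p m α) 2 ∧
      (∀ x y : upperCentralSeries (HGroup p m α) 2,
        Pi (x, y) (PresentedGroup.of 0) = (PresentedGroup.of 0 : HGroup p m α) * x ∧
        Pi (x, y) (PresentedGroup.of 1) = (PresentedGroup.of 1 : HGroup p m α) * y ∧
        ∀ z ∈ upperCentralSeries (HGroup p m α) 2, Pi (x, y) z = z) ∧
      Nat.card (autC (HGroup p m α) 2) = p ^ (6 * m) :=
  HGroup_twoCentral_automorphisms_general p m hodd α (gcd_sub_one_eq_of_vCond hp hα)
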